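/- (Discrete Schauder estimates.) Let h>0, k≥0 an integer, 0<α≤1, 0<s<1/2, and let f:ℤ→ℝ satisfy Σ_{m∈ℤ}|f_m|/(1+|m|)^{1−2s} < ∞. (i) If [f]_{C_h^{k,α}} < ∞ and 2s+α<1, then [(-Δ_h)^{-s} f]_{C_h^{k,α+2s}} ≤ C·[f]_{C_h^{k,α}}. (ii) If [f]_{C_h^{k,α}} < ∞ and 2s+α>1, then [(-Δ_h)^{-s} f]_{C_h^{k+1,α+2s−1}} ≤ C·[f]_{C_h^{k,α}}. (iii) If f is bounded, then [(-Δ_h)^{-s} f]_{C_h^{0,2s}} ≤ C·sup_j|f_j|. In all cases the constant C>0 depends only on s, α and k, and is independent of h and f. -/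

import Mathlib

/-- The kernel of the fractional discrete integral (negative power) on the mesh of size `h`. -/
noncomputable def Knsh (h s : ℝ) (m : ℤ) : ℝ :=
  ((4 : ℝ) ^ (-s) * Real.Gamma (1/2 - s) / (Real.sqrt Real.pi * Real.Gamma s)) *
    (h ^ (2 * s) * Real.Gamma (|(m : ℝ)| + s) / Real.Gamma (|(m : ℝ)| + 1 - s))

/-- The fractional discrete integral `(-Δ_h)^{-s} f_j = Σ_{m ∈ ℤ} K_{-s}^h(j-m) f_m`. -/
noncomputable def fracInt (h s : ℝ) (f : ℤ → ℝ) (j : ℤ) : ℝ :=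
  ∑' m : ℤ, Knsh h s (j - m) * f m

/-- Forward discrete derivative `D_+ u_j = (u_{j+1} - u_j)/h`. -/
noncomputable def Dp (h : ℝ) (u : ℤ → ℝ) : ℤ → ℝ := fun j => (u (j + 1) - u j) / h

/-- Backward discrete derivative `D_- u_j = (u_j - u_{j-1})/h`. -/
noncomputable def Dm (h : ℝ) (u : ℤ → ℝ) : ℤ → ℝ := fun j => (u j - u (j - 1)) / h

/-- Discrete Hölder seminorm `[u]_{C_h^{0,β}}`, valued in `ℝ≥0∞`. -/
noncomputable def hsemi (h β : ℝ) (u : ℤ → ℝ) : ENNReal :=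
  ⨆ (j : ℤ) (m : ℤ) (_ : j ≠ m),
    ENNReal.ofReal (|u j - u m| / (h * |((j - m : ℤ) : ℝ)|) ^ β)

/-- Discrete Hölder seminorm of order `k`. -/
noncomputable def ksemi (h : ℝ) (k : ℕ) (β : ℝ) (u : ℤ → ℝ) : ENNReal :=
  ∑ γ ∈ Finset.range (k + 1), hsemi h β ((Dp h)^[γ] ((Dm h)^[k - γ] u))


/-! ### Elementary inequalities -/

lemma aux_bern_pos {β : ℝ} (h0 : 0 < β) (h1 : β < 1) (n : ℕ) :
    (1 + (n : ℝ)) ^ (β - 1) ≤ ((n : ℝ) + 1) ^ β / β - (n : ℝ) ^ β / β := by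
  have hn : (0 : ℝ) < (n : ℝ) + 1 := by positivity
  have hx : (-1 : ℝ) ≤ -(1 / ((n : ℝ) + 1)) := by
    rw [neg_le_neg_iff, div_le_one hn]; linarith [(Nat.cast_nonneg n : (0 : ℝ) ≤ n)]
  have hb := rpow_one_add_le_one_add_mul_self hx h0.le h1.le
  have e1 : (1 : ℝ) + -(1 / ((n : ℝ) + 1)) = (n : ℝ) / ((n : ℝ) + 1) := by field_simp; ring
  rw [e1, Real.div_rpow (Nat.cast_nonneg n) hn.le, div_le_iff₀ (by positivity)] at hb
  have e2 : (1 + (n : ℝ)) ^ (β - 1) = ((n : ℝ) + 1) ^ β / ((n : ℝ) + 1) := by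
    rw [add_comm, Real.rpow_sub hn, Real.rpow_one]
  rw [e2, ← sub_div, le_div_iff₀ h0]
  have : (1 + β * -(1 / ((n : ℝ) + 1))) * ((n : ℝ) + 1) ^ β
      = ((n : ℝ) + 1) ^ β - ((n : ℝ) + 1) ^ β / ((n : ℝ) + 1) * β := by ring
  linarith

lemma aux_bern_neg {p : ℝ} (h0 : 0 < p) (h1 : p < 1) (n : ℕ) (hn1 : 1 ≤ n) :
    (1 + (n : ℝ)) ^ (-p - 1) ≤ (n : ℝ) ^ (-p) / p - ((n : ℝ) + 1) ^ (-p) / p := by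
  have hn0 : (0 : ℝ) < (n : ℝ) := by exact_mod_cast hn1
  have hn : (0 : ℝ) < (n : ℝ) + 1 := by positivity
  have hx : (-1 : ℝ) ≤ -(1 / ((n : ℝ) + 1)) := by
    rw [neg_le_neg_iff, div_le_one hn]; linarith
  have hb := rpow_one_add_le_one_add_mul_self hx h0.le h1.le
  have e1 : (1 : ℝ) + -(1 / ((n : ℝ) + 1)) = (n : ℝ) / ((n : ℝ) + 1) := by field_simp; ring
  rw [e1, Real.div_rpow (Nat.cast_nonneg n) hn.le] at hb
  have e2 : (1 + (n : ℝ)) ^ (-p - 1) = (((n : ℝ) + 1) ^ p)⁻¹ * (1 / ((n : ℝ) + 1)) := by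
    rw [add_comm, Real.rpow_sub hn, Real.rpow_one, Real.rpow_neg hn.le]; ring
  rw [e2, ← sub_div, le_div_iff₀ h0, Real.rpow_neg hn0.le, Real.rpow_neg hn.le]
  set x := 1 / ((n : ℝ) + 1) with hxd
  have hxpos : 0 < x := by positivity
  set A := (n : ℝ) ^ p
  set B := ((n : ℝ) + 1) ^ p
  have hA : 0 < A := by positivity
  have hB : 0 < B := by positivity
  have hkey : (1 + p * x) * (A / B) ≤ 1 := by
    calc (1 + p * x) * (A / B) ≤ (1 + p * x) * (1 + p * -x) := by gcongr
      _ ≤ 1 := by nlinarith [sq_nonneg (p * x)]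
  have : B⁻¹ * (1 + p * x) ≤ A⁻¹ := by
    have h3 : (1 + p * x) * (A / B) * A⁻¹ ≤ 1 * A⁻¹ := by gcongr
    have h4 : (1 + p * x) * (A / B) * A⁻¹ = B⁻¹ * (1 + p * x) := by field_simp
    linarith
  nlinarith

lemma aux_sum_natAbs (w : ℕ → ℝ) (hw : ∀ n, 0 ≤ w n) (c : ℝ)
    (hc : ∀ M, ∑ n ∈ Finset.range M, w n ≤ c) (u : Finset ℤ) :
    ∑ n ∈ u, w n.natAbs ≤ 2 * c := by
  have key : ∀ t : Finset ℤ, Set.InjOn Int.natAbs (t : Set ℤ) → ∑ n ∈ t, w n.natAbs ≤ c := by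
    intro t ht
    rw [← Finset.sum_image (f := w) ht]
    refine le_trans ?_ (hc ((t.image Int.natAbs).sup id + 1))
    apply Finset.sum_le_sum_of_subset_of_nonneg
    · intro x hx
      rw [Finset.mem_range]
      have : id x ≤ (t.image Int.natAbs).sup id := Finset.le_sup hx
      simp only [id] at this
      omega
    · intros; exact hw _
  rw [← Finset.sum_filter_add_sum_filter_not u (fun n => 0 ≤ n)]
  have h1 := key (u.filter (fun n => 0 ≤ n)) (by
    intro a ha b hb hab
    simp at ha hb hab
    omega)
  have h2 := key (u.filter (fun n => ¬ 0 ≤ n)) (by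
    intro a ha b hb hab
    simp at ha hb hab
    omega)
  linarith

lemma aux_natAbs_cast (n : ℤ) : ((n.natAbs : ℕ) : ℝ) = |(n : ℝ)| := by
  rw [Nat.cast_natAbs, Int.cast_abs]

/-- near sums -/
lemma aux_near {β : ℝ} (h0 : 0 < β) (h1 : β < 1) (N : ℕ) (u : Finset ℤ)
    (hu : ∀ n ∈ u, n.natAbs ≤ N) :
    ∑ n ∈ u, (1 + |(n : ℝ)|) ^ (β - 1) ≤ 2 * (((N : ℝ) + 1) ^ β / β) := by
  have := aux_sum_natAbs (fun n => if n ≤ N then (1 + (n : ℝ)) ^ (β - 1) else 0)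
    (fun n => by split_ifs <;> positivity) (((N : ℝ) + 1) ^ β / β) (by
      intro M
      have hv : ∀ n ∈ Finset.range M, (if n ≤ N then (1 + (n : ℝ)) ^ (β - 1) else 0) ≤
          (fun n : ℕ => ((min n (N + 1) : ℕ) : ℝ) ^ β / β) (n + 1) -
          (fun n : ℕ => ((min n (N + 1) : ℕ) : ℝ) ^ β / β) n := by
        intro n _
        dsimp only
        split_ifs with hn
        · rw [min_eq_left (by omega), min_eq_left (by omega)]
          push_cast
          exact aux_bern_pos h0 h1 n
        · rw [min_eq_right (by omega), min_eq_right (by omega)]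
          simp
      refine (Finset.sum_le_sum hv).trans ?_
      rw [Finset.sum_range_sub (fun n : ℕ => ((min n (N + 1) : ℕ) : ℝ) ^ β / β)]
      have : ((min M (N + 1) : ℕ) : ℝ) ^ β / β ≤ ((N : ℝ) + 1) ^ β / β := by
        gcongr
        have : min M (N + 1) ≤ N + 1 := min_le_right _ _
        exact_mod_cast this
      have h3 : 0 ≤ ((min 0 (N + 1) : ℕ) : ℝ) ^ β / β := by positivity
      linarith) u
  refine le_trans (le_of_eq ?_) this
  apply Finset.sum_congr rfl
  intro n hn
  rw [if_pos (hu n hn), aux_natAbs_cast]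

/-- far sums -/
lemma aux_far {p : ℝ} (h0 : 0 < p) (h1 : p < 1) (N : ℕ) (u : Finset ℤ)
    (hu : ∀ n ∈ u, N < n.natAbs) :
    ∑ n ∈ u, (1 + |(n : ℝ)|) ^ (-p - 1) ≤ 2 * (((N : ℝ) + 1) ^ (-p) / p) := by
  have := aux_sum_natAbs (fun n => if N < n then (1 + (n : ℝ)) ^ (-p - 1) else 0)
    (fun n => by split_ifs <;> positivity) (((N : ℝ) + 1) ^ (-p) / p) (by
      intro M
      have hv : ∀ n ∈ Finset.range M, (if N < n then (1 + (n : ℝ)) ^ (-p - 1) else 0) ≤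
          (fun n : ℕ => -(((max n (N + 1) : ℕ) : ℝ) ^ (-p) / p)) (n + 1) -
          (fun n : ℕ => -(((max n (N + 1) : ℕ) : ℝ) ^ (-p) / p)) n := by
        intro n _
        dsimp only
        split_ifs with hn
        · rw [max_eq_left (by omega), max_eq_left (by omega)]
          push_cast
          have := aux_bern_neg h0 h1 n (by omega)
          linarith
        · rw [max_eq_right (by omega), max_eq_right (by omega)]
          simp
      refine (Finset.sum_le_sum hv).trans ?_
      rw [Finset.sum_range_sub (fun n : ℕ => -(((max n (N + 1) : ℕ) : ℝ) ^ (-p) / p))]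
      have h3 : 0 ≤ ((max M (N + 1) : ℕ) : ℝ) ^ (-p) / p := by positivity
      rw [max_eq_right (by omega : 0 ≤ N + 1)]
      push_cast at h3 ⊢
      linarith) u
  refine le_trans (le_of_eq ?_) this
  apply Finset.sum_congr rfl
  intro n hn
  rw [if_pos (hu n hn), aux_natAbs_cast]

lemma aux_telescope (L : ℤ → ℝ) (a : ℤ) (n : ℕ) :
    ∑ m ∈ Finset.Ico a (a + n), (L (m + 1) - L m) = L (a + n) - L a := by
  induction n with
  | zero => simp
  | succ n ih =>
    have : Finset.Ico a (a + ((n + 1 : ℕ) : ℤ)) = insert (a + n) (Finset.Ico a (a + n)) := by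
      ext x; simp; omega
    rw [this, Finset.sum_insert (by simp), ih]
    push_cast
    rw [← add_assoc]; ring

lemma aux_summable_pow {a : ℝ} (ha : 0 < a) :
    Summable (fun n : ℤ => (1 + |(n : ℝ)|) ^ (-a - 1)) := by
  set p := min a (1 / 2) with hp
  have hp0 : 0 < p := by positivity
  have hp1 : p < 1 := (min_le_right _ _).trans_lt (by norm_num)
  have h1 : Summable (fun n : ℤ => (1 + |(n : ℝ)|) ^ (-p - 1)) := by
    apply summable_of_sum_le (c := 1 + 2 * ((((0 : ℕ) : ℝ) + 1) ^ (-p) / p))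
    · intro n; dsimp; positivity
    · intro u
      rw [← Finset.sum_filter_add_sum_filter_not u (fun n => n = 0)]
      apply add_le_add
      · calc _ ≤ ∑ n ∈ ({0} : Finset ℤ), (1 + |(n : ℝ)|) ^ (-p - 1) := by
              apply Finset.sum_le_sum_of_subset_of_nonneg
              · intro x hx; simp at hx ⊢; exact hx.2
              · intros; positivity
          _ = 1 := by simp
      · apply aux_far hp0 hp1
        intro n hn
        simp at hn
        omega
  refine Summable.of_nonneg_of_le (fun n => by positivity) (fun n => ?_) h1
  apply Real.rpow_le_rpow_of_exponent_le
  · linarith [abs_nonneg (n : ℝ)]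
  · linarith [min_le_left a (1 / 2)]

lemma aux_hasSum_zero (L : ℤ → ℝ) {a C0 : ℝ} (ha : 0 < a)
    (H1 : ∀ m : ℤ, |L m| ≤ C0 * (1 + |(m : ℝ)|) ^ (-a))
    (H2 : ∀ m : ℤ, |L (m + 1) - L m| ≤ C0 * (1 + |(m : ℝ)|) ^ (-a - 1)) (R : ℕ) :
    HasSum (fun m : ℤ => L (m + R) - L m) 0 := by
  have hs : Summable (fun m : ℤ => L (m + 1) - L m) :=
    Summable.of_norm_bounded ((aux_summable_pow ha).mul_left C0) (by simpa using H2)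
  have hz : HasSum (fun m : ℤ => L (m + 1) - L m) 0 := by
    have h1 := hs.hasSum
    have h2 := h1.comp (Finset.tendsto_Ico_neg (R := ℤ))
    have hlim : Filter.Tendsto (fun N : ℕ => C0 * (1 + (N : ℝ)) ^ (-a)) Filter.atTop (nhds 0) := by
      have : Filter.Tendsto (fun N : ℕ => (1 + (N : ℝ)) ^ (-a)) Filter.atTop (nhds 0) :=
        (tendsto_rpow_neg_atTop ha).comp
          (Filter.tendsto_atTop_add_const_left _ _ tendsto_natCast_atTop_atTop)
      simpa using this.const_mul C0
    have h3 : Filter.Tendsto (fun N : ℕ => L N) Filter.atTop (nhds 0) :=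
      squeeze_zero_norm (fun N => by simpa using H1 N) hlim
    have h4 : Filter.Tendsto (fun N : ℕ => L (-N)) Filter.atTop (nhds 0) :=
      squeeze_zero_norm (fun N => by simpa using H1 (-N)) hlim
    have h5 := h3.sub h4
    rw [sub_zero] at h5
    have h6 : ((fun u : Finset ℤ => ∑ m ∈ u, (L (m + 1) - L m)) ∘ fun n : ℕ => Finset.Ico (-(n : ℤ)) n)
        = fun N : ℕ => L N - L (-N) := by
      funext N
      have := aux_telescope L (-N) (2 * N)
      have e : -(N : ℤ) + ((2 * N : ℕ) : ℤ) = N := by push_cast; ring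
      rw [e] at this
      simpa using this
    have h7 : Filter.Tendsto (fun N : ℕ => L N - L (-N)) Filter.atTop
      (nhds (∑' m : ℤ, (L (m + 1) - L m))) := by rw [← h6]; exact h2
    rw [← tendsto_nhds_unique h7 h5]
    exact h1
  induction R with
  | zero => simp [hasSum_zero]
  | succ R ih =>
    have h8 : HasSum (fun m : ℤ => L (m + R + 1) - L (m + R)) 0 :=
      (Equiv.addRight (R : ℤ)).hasSum_iff.mpr hz
    have h9 := h8.add ih
    rw [add_zero] at h9
    convert h9 using 2 with m
    push_cast
    rw [add_assoc]; ring

/-- The general estimate for a convolution operator. -/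
lemma aux_core {a α β C0 : ℝ} (ha : 0 < a) (hα : 0 ≤ α) (hβ : β = α + 1 - a) (hβ0 : 0 < β)
    (hβ1 : β < 1) (hC0 : 0 < C0) (L : ℤ → ℝ)
    (H1 : ∀ m : ℤ, |L m| ≤ C0 * (1 + |(m : ℝ)|) ^ (-a))
    (H2 : ∀ m : ℤ, |L (m + 1) - L m| ≤ C0 * (1 + |(m : ℝ)|) ^ (-a - 1))
    (H3 : ∀ R : ℕ, 1 ≤ R →
      |∑ m ∈ Finset.Icc (-(R : ℤ)) (3 * R), L m| ≤ C0 * (R : ℝ) ^ (1 - a)) :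
    ∃ C : ℝ, 0 < C ∧ ∀ (g : ℤ → ℝ) (B : ℝ), 0 ≤ B →
      (∀ j : ℤ, Summable (fun m : ℤ => L (j - m) * g m)) →
      (∀ m n : ℤ, |g m - g n| ≤ B * |((m - n : ℤ) : ℝ)| ^ α) →
      ∀ (j : ℤ) (R : ℕ), 1 ≤ R →
        |(∑' m : ℤ, L (j - m) * g m) - ∑' m : ℤ, L (j + R - m) * g m| ≤ C * B * (R : ℝ) ^ β := by
  have hp0 : 0 < 1 - β := by linarith
  refine ⟨C0 * (8 / β) + C0 * (8 / β) + C0 + C0 * (2 ^ (a + 1) * (2 / (1 - β))), by positivity, ?_⟩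
  intro g B hB hsum hg j R hR
  have hR0 : (1 : ℝ) ≤ (R : ℝ) := by exact_mod_cast hR
  have hRpos : (0 : ℝ) < (R : ℝ) := by linarith
  set φ : ℤ → ℝ := fun n => g (j - n) - g j with hφ
  have hφd : ∀ n m : ℤ, |φ n - φ m| ≤ B * |((n - m : ℤ) : ℝ)| ^ α := by
    intro n m
    have := hg (j - n) (j - m)
    have e : j - n - (j - m) = -(n - m) := by ring
    rw [e] at this
    simp only [hφ]
    rw [sub_sub_sub_cancel_right]
    rwa [Int.cast_neg, abs_neg] at this
  have hφ0 : ∀ n : ℤ, |φ n| ≤ B * |(n : ℝ)| ^ α := by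
    intro n
    have := hφd n 0
    simpa [hφ] using this
  -- sum representation
  set F : ℤ → ℝ := fun n => (L n - L (n + R)) * φ n with hF
  have hFsum : HasSum F ((∑' m : ℤ, L (j - m) * g m) - ∑' m : ℤ, L (j + R - m) * g m) := by
    have h1 : HasSum (fun n : ℤ => L n * g (j - n)) (∑' m : ℤ, L (j - m) * g m) := by
      have := (Equiv.subLeft j).hasSum_iff.mpr (hsum j).hasSum
      simpa [Function.comp_def] using this
    have h2 : HasSum (fun n : ℤ => L (n + R) * g (j - n)) (∑' m : ℤ, L (j + R - m) * g m) := by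
      have := (Equiv.subLeft j).hasSum_iff.mpr (hsum (j + R)).hasSum
      convert this using 2 with n
      simp only [Function.comp, Equiv.subLeft_apply]
      congr 2; ring
    have h3 := (aux_hasSum_zero L ha H1 H2 R).mul_right (g j)
    have h4 := (h1.sub h2).add h3
    rw [zero_mul, add_zero] at h4
    have e : F = fun n => L n * g (j - n) - L (n + R) * g (j - n) + (L (n + R) - L n) * g j := by
      funext n
      simp only [hF, hφ]; ring
    rw [e]
    exact h4
  -- pointwise product bound
  have hprod : ∀ (n : ℤ) (y : ℝ), |y| ≤ B * |(n : ℝ)| ^ α →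
      |L n * y| ≤ C0 * B * (1 + |(n : ℝ)|) ^ (β - 1) := by
    intro n y hy
    have h1 : (0 : ℝ) < 1 + |(n : ℝ)| := by positivity
    rw [abs_mul]
    calc |L n| * |y| ≤ (C0 * (1 + |(n : ℝ)|) ^ (-a)) * (B * (1 + |(n : ℝ)|) ^ α) := by
          apply mul_le_mul (H1 n) (hy.trans _) (abs_nonneg _) (by positivity)
          gcongr
          linarith
      _ = C0 * B * ((1 + |(n : ℝ)|) ^ (-a) * (1 + |(n : ℝ)|) ^ α) := by ring
      _ = _ := by rw [← Real.rpow_add h1]; congr 2; linarith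
  have hnear : ∀ (u : Finset ℤ) (y : ℤ → ℝ), (∀ n ∈ u, n.natAbs ≤ 3 * R) →
      (∀ n ∈ u, |y n| ≤ B * |(n : ℝ)| ^ α) →
      |∑ n ∈ u, L n * y n| ≤ C0 * (8 / β) * B * (R : ℝ) ^ β := by
    intro u y hu hy
    calc |∑ n ∈ u, L n * y n| ≤ ∑ n ∈ u, |L n * y n| := Finset.abs_sum_le_sum_abs _ _
      _ ≤ ∑ n ∈ u, C0 * B * (1 + |(n : ℝ)|) ^ (β - 1) :=
          Finset.sum_le_sum (fun n hn => hprod n (y n) (hy n hn))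
      _ = C0 * B * ∑ n ∈ u, (1 + |(n : ℝ)|) ^ (β - 1) := by rw [Finset.mul_sum]
      _ ≤ C0 * B * (2 * ((((3 * R : ℕ) : ℝ) + 1) ^ β / β)) := by
          gcongr
          exact aux_near hβ0 hβ1 (3 * R) u hu
      _ ≤ C0 * B * (2 * ((4 * (R : ℝ) ^ β) / β)) := by
          gcongr
          calc (((3 * R : ℕ) : ℝ) + 1) ^ β ≤ (4 * (R : ℝ)) ^ β := by
                gcongr; push_cast; linarith
            _ = 4 ^ β * (R : ℝ) ^ β := Real.mul_rpow (by norm_num) hRpos.le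
            _ ≤ 4 * (R : ℝ) ^ β := by
                gcongr
                calc (4 : ℝ) ^ β ≤ 4 ^ (1 : ℝ) :=
                      Real.rpow_le_rpow_of_exponent_le (by norm_num) hβ1.le
                  _ = 4 := Real.rpow_one _
      _ = _ := by ring
  set S : Finset ℤ := Finset.Icc (-(2 * R : ℤ)) (2 * R) with hS
  have hA : |∑ n ∈ S, L n * φ n| ≤ C0 * (8 / β) * B * (R : ℝ) ^ β := by
    apply hnear
    · intro n hn
      simp [hS] at hn
      omega
    · intro n _; exact hφ0 n
  have hshift : ∀ f : ℤ → ℝ, ∑ n ∈ S, f (n + R) = ∑ n ∈ Finset.Icc (-(R : ℤ)) (3 * R), f n := by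
    intro f
    refine Finset.sum_bij' (fun n _ => n + R) (fun n _ => n - R) ?_ ?_ ?_ ?_ ?_
    · intro n hn; simp [hS] at hn ⊢; omega
    · intro n hn; simp [hS] at hn ⊢; omega
    · intro n hn; ring
    · intro n hn; ring
    · intro n hn; rfl
  have hB1 : |∑ n ∈ S, L (n + R) * (φ n - φ (-R))| ≤ C0 * (8 / β) * B * (R : ℝ) ^ β := by
    have e : ∑ n ∈ S, L (n + R) * (φ n - φ (-R)) =
        ∑ n ∈ Finset.Icc (-(R : ℤ)) (3 * R), L n * (φ (n - R) - φ (-R)) := by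
      rw [← hshift (fun n => L n * (φ (n - R) - φ (-R)))]
      simp
    rw [e]
    apply hnear
    · intro n hn
      simp at hn
      omega
    · intro n _
      have := hφd (n - R) (-R)
      simpa using this
  have hB2 : |φ (-R) * ∑ n ∈ S, L (n + R)| ≤ C0 * B * (R : ℝ) ^ β := by
    rw [hshift L, abs_mul]
    have h1 : |φ (-R)| ≤ B * (R : ℝ) ^ α := by simpa using hφ0 (-R)
    calc _ ≤ (B * (R : ℝ) ^ α) * (C0 * (R : ℝ) ^ (1 - a)) :=
          mul_le_mul h1 (H3 R hR) (abs_nonneg _) (by positivity)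
      _ = C0 * B * ((R : ℝ) ^ α * (R : ℝ) ^ (1 - a)) := by ring
      _ = _ := by rw [← Real.rpow_add hRpos]; congr 2; linarith
  have hSbound : |∑ n ∈ S, F n| ≤ (C0 * (8 / β) + C0 * (8 / β) + C0) * B * (R : ℝ) ^ β := by
    have e : ∑ n ∈ S, F n = ∑ n ∈ S, L n * φ n - (∑ n ∈ S, L (n + R) * (φ n - φ (-R)))
        - φ (-R) * ∑ n ∈ S, L (n + R) := by
      rw [Finset.mul_sum, ← Finset.sum_sub_distrib, ← Finset.sum_sub_distrib]
      apply Finset.sum_congr rfl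
      intro n _
      simp only [hF]; ring
    rw [e]
    rw [abs_le] at *
    constructor <;> nlinarith
  have hdiff : ∀ n : ℤ, 2 * R < n.natAbs →
      |F n| ≤ C0 * B * R * 2 ^ (a + 1) * (1 + |(n : ℝ)|) ^ (-(1 - β) - 1) := by
    intro n hn
    have hn' : 2 * (R : ℝ) < |(n : ℝ)| := by
      rw [← aux_natAbs_cast]; exact_mod_cast hn
    have h1 : (0 : ℝ) < 1 + |(n : ℝ)| := by positivity
    have hd : ∀ i : ℕ, i ≤ R → |L (n + i) - L n| ≤
        i * (C0 * (2 ^ (a + 1) * (1 + |(n : ℝ)|) ^ (-a - 1))) := by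
      intro i
      induction i with
      | zero => intro _; simp
      | succ i ih =>
        intro hi
        have h2 := ih (by omega)
        have h3 := H2 (n + i)
        have hiR : (i : ℝ) ≤ R := by exact_mod_cast (by omega : i ≤ R)
        have h4 : (1 + |(n : ℝ)|) / 2 ≤ 1 + |((n + i : ℤ) : ℝ)| := by
          have : |(n : ℝ)| ≤ |((n + i : ℤ) : ℝ)| + i := by
            have h5 := abs_sub ((n + i : ℤ) : ℝ) (i : ℝ)
            push_cast at h5 ⊢
            rw [add_sub_cancel_right, Nat.abs_cast] at h5
            exact h5
          linarith
        have h5 : (1 + |((n + i : ℤ) : ℝ)|) ^ (-a - 1) ≤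
            2 ^ (a + 1) * (1 + |(n : ℝ)|) ^ (-a - 1) := by
          calc _ ≤ ((1 + |(n : ℝ)|) / 2) ^ (-a - 1) :=
                Real.rpow_le_rpow_of_nonpos (by positivity) h4 (by linarith)
            _ = _ := by
                rw [Real.div_rpow h1.le (by norm_num), div_eq_mul_inv,
                  ← Real.rpow_neg (by norm_num), mul_comm]
                congr 2; ring
        have h6 : |L (n + i + 1) - L (n + i)| ≤
            C0 * (2 ^ (a + 1) * (1 + |(n : ℝ)|) ^ (-a - 1)) := h3.trans (by gcongr)
        have h7 := abs_sub_le (L (n + i + 1)) (L (n + i)) (L n)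
        push_cast
        rw [← add_assoc]
        linarith
    have h8 := hd R le_rfl
    simp only [hF]
    rw [abs_mul, abs_sub_comm]
    calc |L (n + R) - L n| * |φ n|
        ≤ (R * (C0 * (2 ^ (a + 1) * (1 + |(n : ℝ)|) ^ (-a - 1)))) * (B * (1 + |(n : ℝ)|) ^ α) := by
          apply mul_le_mul h8 ((hφ0 n).trans _) (abs_nonneg _) (by positivity)
          gcongr
          linarith
      _ = C0 * B * R * 2 ^ (a + 1) * ((1 + |(n : ℝ)|) ^ (-a - 1) * (1 + |(n : ℝ)|) ^ α) := by ring
      _ = _ := by rw [← Real.rpow_add h1]; congr 2; linarith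
  have hfar : ∀ u : Finset ℤ, (∀ n ∈ u, 2 * R < n.natAbs) →
      |∑ n ∈ u, F n| ≤ C0 * (2 ^ (a + 1) * (2 / (1 - β))) * B * (R : ℝ) ^ β := by
    intro u hu
    calc |∑ n ∈ u, F n| ≤ ∑ n ∈ u, |F n| := Finset.abs_sum_le_sum_abs _ _
      _ ≤ ∑ n ∈ u, C0 * B * R * 2 ^ (a + 1) * (1 + |(n : ℝ)|) ^ (-(1 - β) - 1) :=
          Finset.sum_le_sum (fun n hn => hdiff n (hu n hn))
      _ = C0 * B * R * 2 ^ (a + 1) * ∑ n ∈ u, (1 + |(n : ℝ)|) ^ (-(1 - β) - 1) := by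
          rw [Finset.mul_sum]
      _ ≤ C0 * B * R * 2 ^ (a + 1) * (2 * ((((2 * R : ℕ) : ℝ) + 1) ^ (-(1 - β)) / (1 - β))) := by
          gcongr
          exact aux_far hp0 (by linarith) (2 * R) u hu
      _ ≤ C0 * B * R * 2 ^ (a + 1) * (2 * ((R : ℝ) ^ (-(1 - β)) / (1 - β))) := by
          gcongr C0 * B * R * 2 ^ (a + 1) * (2 * (?_ / (1 - β)))
          apply Real.rpow_le_rpow_of_nonpos hRpos _ (by linarith)
          push_cast; linarith
      _ = C0 * (2 ^ (a + 1) * (2 / (1 - β))) * B * ((R : ℝ) ^ (1 : ℝ) * (R : ℝ) ^ (-(1 - β))) := by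
          rw [Real.rpow_one]; ring
      _ = _ := by rw [← Real.rpow_add hRpos]; congr 2; linarith
  have hlim := (continuous_abs.tendsto _).comp hFsum
  refine le_of_tendsto hlim ?_
  filter_upwards [Filter.eventually_ge_atTop S] with u hu
  simp only [Function.comp]
  rw [← Finset.sum_sdiff hu]
  have h1 := hfar (u \ S) (by
    intro n hn
    simp [hS] at hn
    omega)
  have h2 := abs_add_le (∑ n ∈ u \ S, F n) (∑ n ∈ S, F n)
  linarith

/-! ### Kernel estimates -/

lemma aux_Knsh_scale (h s : ℝ) (m : ℤ) : Knsh h s m = h ^ (2 * s) * Knsh 1 s m := by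
  unfold Knsh
  rw [Real.one_rpow]; ring

/-- the kernel on naturals -/
noncomputable def auxG (s : ℝ) (n : ℕ) : ℝ := Knsh 1 s n

lemma aux_Knsh_neg (s : ℝ) (m : ℤ) : Knsh 1 s (-m) = Knsh 1 s m := by
  simp [Knsh]

lemma auxG_pos {s : ℝ} (hs0 : 0 < s) (hs1 : s < 1 / 2) (n : ℕ) : 0 < auxG s n := by
  unfold auxG Knsh
  have hn : (0 : ℝ) ≤ n := Nat.cast_nonneg n
  have h1 : 0 < Real.Gamma (1 / 2 - s) := Real.Gamma_pos_of_pos (by linarith)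
  have h2 : 0 < Real.Gamma s := Real.Gamma_pos_of_pos (by linarith)
  have h3 : 0 < Real.Gamma (|((n : ℤ) : ℝ)| + s) := Real.Gamma_pos_of_pos (by positivity)
  have h4 : 0 < Real.Gamma (|((n : ℤ) : ℝ)| + 1 - s) :=
    Real.Gamma_pos_of_pos (by linarith [abs_nonneg ((n : ℤ) : ℝ)])
  positivity

lemma auxG_succ {s : ℝ} (hs0 : 0 < s) (hs1 : s < 1 / 2) (n : ℕ) :
    auxG s (n + 1) = auxG s n * (1 - (1 - 2 * s) / ((n : ℝ) + 1 - s)) := by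
  unfold auxG Knsh
  have hn : (0 : ℝ) ≤ n := Nat.cast_nonneg n
  have e0 : |(((n + 1 : ℕ) : ℤ) : ℝ)| = (n : ℝ) + 1 := by
    push_cast; rw [abs_of_nonneg (by linarith)]
  have e1 : |((n : ℤ) : ℝ)| = (n : ℝ) := by simp
  have g1 : Real.Gamma ((n : ℝ) + 1 + s) = ((n : ℝ) + s) * Real.Gamma ((n : ℝ) + s) := by
    rw [← Real.Gamma_add_one (by linarith)]; congr 1; ring
  have g2 : Real.Gamma ((n : ℝ) + 1 + 1 - s) =
      ((n : ℝ) + 1 - s) * Real.Gamma ((n : ℝ) + 1 - s) := by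
    rw [← Real.Gamma_add_one (by linarith)]; congr 1; ring
  rw [e0, e1, g1, g2]
  have h4 : Real.Gamma ((n : ℝ) + 1 - s) ≠ 0 := (Real.Gamma_pos_of_pos (by linarith)).ne'
  have h5 : (n : ℝ) + 1 - s ≠ 0 := by linarith
  have e : 1 - (1 - 2 * s) / ((n : ℝ) + 1 - s) = ((n : ℝ) + s) / ((n : ℝ) + 1 - s) := by
    field_simp; ring
  rw [e]
  set c := (4 : ℝ) ^ (-s) * Real.Gamma (1 / 2 - s) / (Real.sqrt Real.pi * Real.Gamma s)
  field_simp

lemma auxG_le {s : ℝ} (hs0 : 0 < s) (hs1 : s < 1 / 2) (n : ℕ) :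
    auxG s n ≤ auxG s 0 * (1 + (n : ℝ)) ^ (-(1 - 2 * s)) := by
  induction n with
  | zero => simp
  | succ n ih =>
    have hn : (0 : ℝ) ≤ n := Nat.cast_nonneg n
    have hG0 := auxG_pos hs0 hs1 0
    have hp : 0 < 1 - 2 * s := by linarith
    set p := 1 - 2 * s with hpd
    rw [auxG_succ hs0 hs1]
    have hn1 : (0 : ℝ) < (n : ℝ) + 1 := by positivity
    set x := 1 / ((n : ℝ) + 1) with hx
    have hx0 : 0 < x := by positivity
    have h1 : 1 - p / ((n : ℝ) + 1 - s) ≤ 1 - p * x := by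
      rw [hx, mul_one_div]
      gcongr
      · linarith
      · linarith
    have hpos : 0 ≤ 1 - p / ((n : ℝ) + 1 - s) := by
      rw [sub_nonneg, div_le_one (by linarith)]; linarith
    have hb := rpow_one_add_le_one_add_mul_self (by linarith : -1 ≤ x) hp.le (by linarith : p ≤ 1)
    have h2 : 1 - p * x ≤ (1 + x) ^ (-p) := by
      rw [Real.rpow_neg (by positivity)]
      rw [← one_div, le_div_iff₀ (by positivity)]
      have h6 : 0 < (1 + x) ^ p := by positivity
      by_cases h7 : 0 ≤ 1 - p * x
      · calc (1 - p * x) * (1 + x) ^ p ≤ (1 - p * x) * (1 + p * x) := by gcongr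
          _ ≤ 1 := by nlinarith [sq_nonneg (p * x)]
      · nlinarith
    have h3 : (1 + (n : ℝ)) ^ (-p) * (1 + x) ^ (-p) = (1 + ((n + 1 : ℕ) : ℝ)) ^ (-p) := by
      rw [← Real.mul_rpow (by positivity) (by positivity)]
      congr 1
      rw [hx]; push_cast; field_simp; ring
    calc auxG s n * (1 - p / ((n : ℝ) + 1 - s))
        ≤ (auxG s 0 * (1 + (n : ℝ)) ^ (-p)) * (1 + x) ^ (-p) :=
          mul_le_mul ih (h1.trans h2) hpos (by positivity)
      _ = _ := by rw [mul_assoc, h3]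

lemma auxG_diff {s : ℝ} (hs0 : 0 < s) (hs1 : s < 1 / 2) (n : ℕ) :
    |auxG s (n + 1) - auxG s n| ≤ 2 * auxG s 0 * (1 + (n : ℝ)) ^ (-(2 - 2 * s)) := by
  have hn : (0 : ℝ) ≤ n := Nat.cast_nonneg n
  have hG := auxG_pos hs0 hs1 n
  have hG0 := auxG_pos hs0 hs1 0
  have e : auxG s (n + 1) - auxG s n = - (auxG s n * ((1 - 2 * s) / ((n : ℝ) + 1 - s))) := by
    rw [auxG_succ hs0 hs1]; ring
  have hd : 0 < (n : ℝ) + 1 - s := by linarith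
  have h1 : (1 - 2 * s) / ((n : ℝ) + 1 - s) ≤ 2 / (1 + (n : ℝ)) := by
    rw [div_le_div_iff₀ hd (by positivity)]; nlinarith
  have h0 : 0 ≤ (1 - 2 * s) / ((n : ℝ) + 1 - s) := div_nonneg (by linarith) hd.le
  rw [e, abs_neg, abs_of_nonneg (by positivity)]
  calc _ ≤ (auxG s 0 * (1 + (n : ℝ)) ^ (-(1 - 2 * s))) * (2 / (1 + (n : ℝ))) :=
        mul_le_mul (auxG_le hs0 hs1 n) h1 h0 (by positivity)
    _ = _ := by
        rw [show -(2 - 2 * s) = -(1 - 2 * s) - 1 by ring, Real.rpow_sub_one (by positivity)]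
        ring

lemma auxG_diff2 {s : ℝ} (hs0 : 0 < s) (hs1 : s < 1 / 2) (n : ℕ) :
    |(auxG s (n + 2) - auxG s (n + 1)) - (auxG s (n + 1) - auxG s n)| ≤
      8 * auxG s 0 * (1 + (n : ℝ)) ^ (-(3 - 2 * s)) := by
  have hn : (0 : ℝ) ≤ n := Nat.cast_nonneg n
  have hG := auxG_pos hs0 hs1 n
  have hG0 := auxG_pos hs0 hs1 0
  have hd : 0 < (n : ℝ) + 1 - s := by linarith
  have hd2 : 0 < (n : ℝ) + 2 - s := by linarith
  have e : (auxG s (n + 2) - auxG s (n + 1)) - (auxG s (n + 1) - auxG s n) =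
      auxG s n * (((1 - 2 * s) / ((n : ℝ) + 1 - s)) * ((2 - 2 * s) / ((n : ℝ) + 2 - s))) := by
    rw [show n + 2 = (n + 1) + 1 by ring, auxG_succ hs0 hs1 (n + 1), auxG_succ hs0 hs1]
    push_cast
    rw [show (n : ℝ) + 1 + 1 - s = (n : ℝ) + 2 - s by ring]
    have := hd.ne'
    have := hd2.ne'
    field_simp
    ring
  have h1 : (1 - 2 * s) / ((n : ℝ) + 1 - s) ≤ 2 / (1 + (n : ℝ)) := by
    rw [div_le_div_iff₀ hd (by positivity)]; nlinarith
  have h0 : 0 ≤ (1 - 2 * s) / ((n : ℝ) + 1 - s) := div_nonneg (by linarith) hd.le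
  have h1' : (2 - 2 * s) / ((n : ℝ) + 2 - s) ≤ 4 / (1 + (n : ℝ)) := by
    rw [div_le_div_iff₀ hd2 (by positivity)]; nlinarith
  have h0' : 0 ≤ (2 - 2 * s) / ((n : ℝ) + 2 - s) := div_nonneg (by linarith) hd2.le
  rw [e, abs_of_nonneg (by positivity)]
  calc _ ≤ (auxG s 0 * (1 + (n : ℝ)) ^ (-(1 - 2 * s))) *
          ((2 / (1 + (n : ℝ))) * (4 / (1 + (n : ℝ)))) := by
        apply mul_le_mul (auxG_le hs0 hs1 n) _ (by positivity) (by positivity)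
        exact mul_le_mul h1 h1' h0' (by positivity)
    _ = _ := by
        rw [show -(3 - 2 * s) = -(1 - 2 * s) - 1 - 1 by ring, Real.rpow_sub_one (by positivity),
          Real.rpow_sub_one (by positivity)]
        ring

lemma aux_compare {q x y : ℝ} (hq0 : 0 ≤ q) (hq : q ≤ 3) (_hx : 0 < x) (hy : 0 < y)
    (hxy : y ≤ 3 * x) : x ^ (-q) ≤ 27 * y ^ (-q) := by
  have h1 : x ^ (-q) ≤ (y / 3) ^ (-q) :=
    Real.rpow_le_rpow_of_nonpos (by positivity) (by linarith) (by linarith)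
  have h2 : (y / 3) ^ (-q) = 3 ^ q * y ^ (-q) := by
    rw [Real.div_rpow hy.le (by norm_num), Real.rpow_neg (by norm_num : (0 : ℝ) ≤ 3)]
    field_simp
  have h3 : (3 : ℝ) ^ q ≤ 27 := by
    calc (3 : ℝ) ^ q ≤ 3 ^ (3 : ℝ) := Real.rpow_le_rpow_of_exponent_le (by norm_num) hq
      _ = 27 := by norm_num
  rw [h2] at h1
  refine h1.trans ?_
  gcongr

lemma aux_kernel {s : ℝ} (hs0 : 0 < s) (hs1 : s < 1 / 2) :
    ∃ C0 : ℝ, 0 < C0 ∧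
      (∀ m : ℤ, |Knsh 1 s m| ≤ C0 * (1 + |(m : ℝ)|) ^ (-(1 - 2 * s))) ∧
      (∀ m : ℤ, |Knsh 1 s (m + 1) - Knsh 1 s m| ≤ C0 * (1 + |(m : ℝ)|) ^ (-(2 - 2 * s))) ∧
      (∀ m : ℤ, |(Knsh 1 s (m + 1 + 1) - Knsh 1 s (m + 1)) - (Knsh 1 s (m + 1) - Knsh 1 s m)|
        ≤ C0 * (1 + |(m : ℝ)|) ^ (-(3 - 2 * s))) := by
  have hG0 := auxG_pos hs0 hs1 0
  have hnat : ∀ n : ℕ, Knsh 1 s (n : ℤ) = auxG s n := fun n => rfl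
  refine ⟨216 * auxG s 0, by positivity, ?_, ?_, ?_⟩
  · have key : ∀ n : ℕ, |auxG s n| ≤ 216 * auxG s 0 * (1 + (n : ℝ)) ^ (-(1 - 2 * s)) := by
      intro n
      rw [abs_of_pos (auxG_pos hs0 hs1 n)]
      have h1 := auxG_le hs0 hs1 n
      have h2 : 0 ≤ auxG s 0 * (1 + (n : ℝ)) ^ (-(1 - 2 * s)) := by positivity
      linarith
    intro m
    obtain ⟨n, rfl | rfl⟩ := m.eq_nat_or_neg
    · rw [hnat]; simpa using key n
    · rw [aux_Knsh_neg, hnat]; simpa using key n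
  · intro m
    have key : ∀ n : ℕ, 1 + |(m : ℝ)| ≤ 3 * (1 + (n : ℝ)) → |auxG s (n + 1) - auxG s n| ≤
        216 * auxG s 0 * (1 + |(m : ℝ)|) ^ (-(2 - 2 * s)) := by
      intro n hn
      have h1 := auxG_diff hs0 hs1 n
      have h2 := aux_compare (q := 2 - 2 * s) (by linarith) (by linarith)
        (by positivity : 0 < 1 + (n : ℝ)) (by positivity : 0 < 1 + |(m : ℝ)|) hn
      have h3 : 0 ≤ auxG s 0 * (1 + |(m : ℝ)|) ^ (-(2 - 2 * s)) := by positivity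
      have h4 := mul_le_mul_of_nonneg_left h2 hG0.le
      nlinarith
    rcases m with n | n
    · have := key n (by simp; linarith [(Nat.cast_nonneg n : (0 : ℝ) ≤ n)])
      exact this
    · have := key n (by
        rw [← aux_natAbs_cast]; simp; linarith [(Nat.cast_nonneg n : (0 : ℝ) ≤ n)])
      have e1 : Knsh 1 s (Int.negSucc n + 1) = auxG s n := by
        rw [← hnat, ← aux_Knsh_neg]; congr 1; omega
      have e2 : Knsh 1 s (Int.negSucc n) = auxG s (n + 1) := by
        rw [← hnat, ← aux_Knsh_neg]; congr 1
      rw [e1, e2, abs_sub_comm]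
      exact this
  · intro m
    have key : ∀ n : ℕ, 1 + |(m : ℝ)| ≤ 3 * (1 + (n : ℝ)) →
        |(auxG s (n + 2) - auxG s (n + 1)) - (auxG s (n + 1) - auxG s n)| ≤
        216 * auxG s 0 * (1 + |(m : ℝ)|) ^ (-(3 - 2 * s)) := by
      intro n hn
      have h1 := auxG_diff2 hs0 hs1 n
      have h2 := aux_compare (q := 3 - 2 * s) (by linarith) (by linarith)
        (by positivity : 0 < 1 + (n : ℝ)) (by positivity : 0 < 1 + |(m : ℝ)|) hn
      have h4 := mul_le_mul_of_nonneg_left h2 hG0.le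
      nlinarith
    rcases m with n | n
    · have := key n (by simp; linarith [(Nat.cast_nonneg n : (0 : ℝ) ≤ n)])
      exact this
    · rcases n with _ | n
      · have h1 := auxG_diff hs0 hs1 0
        have h2 := aux_compare (q := 3 - 2 * s) (by linarith) (by linarith)
          (by norm_num : (0 : ℝ) < 1) (by norm_num : (0 : ℝ) < 2) (by norm_num)
        have e0 : Knsh 1 s (Int.negSucc 0 + 1) = auxG s 0 := rfl
        have e1 : Knsh 1 s (Int.negSucc 0 + 1 + 1) = auxG s 1 := rfl
        have e2 : Knsh 1 s (Int.negSucc 0) = auxG s 1 := by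
          rw [← hnat, ← aux_Knsh_neg]; congr 1
        have e3 : (1 : ℝ) + |((Int.negSucc 0 : ℤ) : ℝ)| = 2 := by
          rw [← aux_natAbs_cast]; norm_num
        rw [e0, e1, e2, e3]
        rw [Real.one_rpow] at h2
        have h4 := mul_le_mul_of_nonneg_left h2 hG0.le
        simp only [Nat.cast_zero, add_zero, Real.one_rpow, mul_one, zero_add] at h1
        have h5 : auxG s 1 - auxG s 0 - (auxG s 0 - auxG s 1) = 2 * (auxG s 1 - auxG s 0) := by ring
        rw [h5, abs_mul, abs_two]
        linarith
      · have := key n (by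
          rw [← aux_natAbs_cast]; simp; linarith [(Nat.cast_nonneg n : (0 : ℝ) ≤ n)])
        have e0 : Knsh 1 s (Int.negSucc (n + 1) + 1 + 1) = auxG s n := by
          rw [← hnat, ← aux_Knsh_neg]; congr 1; omega
        have e1 : Knsh 1 s (Int.negSucc (n + 1) + 1) = auxG s (n + 1) := by
          rw [← hnat, ← aux_Knsh_neg]; congr 1
        have e2 : Knsh 1 s (Int.negSucc (n + 1)) = auxG s (n + 2) := by
          rw [← hnat, ← aux_Knsh_neg]; congr 1
        rw [e0, e1, e2]
        convert this using 2
        ring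

/-! ### Reduction of the theorem to the core estimate -/

/-- absolute convergence of the fractional integral at every point -/
def AuxGood (h s : ℝ) (g : ℤ → ℝ) : Prop :=
  ∀ j : ℤ, Summable (fun m : ℤ => Knsh h s (j - m) * g m)

lemma auxGood_of_weighted {h s : ℝ} (hs0 : 0 < s) (hs1 : s < 1 / 2) (f : ℤ → ℝ)
    (hf : Summable fun m : ℤ => |f m| / (1 + |(m : ℝ)|) ^ (1 - 2 * s)) : AuxGood h s f := by
  obtain ⟨C0, hC0, H1, -, -⟩ := aux_kernel hs0 hs1
  intro j
  have h1 : Summable (fun m : ℤ => Knsh 1 s (j - m) * f m) := by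
    refine Summable.of_norm_bounded (hf.mul_left (C0 * (1 + |(j : ℝ)|) ^ (1 - 2 * s))) ?_
    intro m
    rw [Real.norm_eq_abs, abs_mul]
    have h2 := H1 (j - m)
    have hx : (0 : ℝ) < 1 + |((j - m : ℤ) : ℝ)| := by positivity
    have hj : (0 : ℝ) < 1 + |(j : ℝ)| := by positivity
    have hm : (0 : ℝ) < 1 + |(m : ℝ)| := by positivity
    have h3 : 1 + |(m : ℝ)| ≤ (1 + |(j : ℝ)|) * (1 + |((j - m : ℤ) : ℝ)|) := by
      have : |(m : ℝ)| ≤ |(j : ℝ)| + |((j - m : ℤ) : ℝ)| := by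
        have := abs_sub (j : ℝ) ((j - m : ℤ) : ℝ)
        push_cast at this ⊢
        rwa [sub_sub_cancel] at this
      nlinarith [mul_nonneg (abs_nonneg (j : ℝ)) (abs_nonneg ((j - m : ℤ) : ℝ))]
    have h4 : (1 + |((j - m : ℤ) : ℝ)|) ^ (-(1 - 2 * s)) ≤
        (1 + |(j : ℝ)|) ^ (1 - 2 * s) / (1 + |(m : ℝ)|) ^ (1 - 2 * s) := by
      rw [Real.rpow_neg hx.le, le_div_iff₀ (by positivity), inv_mul_le_iff₀ (by positivity),
        ← Real.mul_rpow hx.le hj.le]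
      rw [mul_comm] at h3
      exact Real.rpow_le_rpow hm.le h3 (by linarith)
    calc |Knsh 1 s (j - m)| * |f m|
        ≤ (C0 * ((1 + |(j : ℝ)|) ^ (1 - 2 * s) / (1 + |(m : ℝ)|) ^ (1 - 2 * s))) * |f m| := by
          gcongr
          exact h2.trans (by gcongr)
      _ = _ := by ring
  have h5 := h1.mul_left (h ^ (2 * s))
  refine h5.congr (fun m => ?_)
  rw [aux_Knsh_scale h]; ring

lemma aux_shift {h s : ℝ} {g : ℤ → ℝ} (hg : AuxGood h s g) (j c : ℤ) :
    HasSum (fun m : ℤ => Knsh h s (j - m) * g (m + c)) (fracInt h s g (j + c)) := by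
  have := (Equiv.addRight c).hasSum_iff.mpr (hg (j + c)).hasSum
  have e : (fun m : ℤ => Knsh h s (j - m) * g (m + c)) =
      (fun m : ℤ => Knsh h s (j + c - m) * g m) ∘ (Equiv.addRight c) := by
    funext m
    simp only [Function.comp, Equiv.coe_addRight]
    rw [add_sub_add_right_eq_sub]
  rw [e]
  exact this

lemma aux_hasSum_Dp {h s : ℝ} {g : ℤ → ℝ} (hg : AuxGood h s g) (j : ℤ) :
    HasSum (fun m : ℤ => Knsh h s (j - m) * Dp h g m) (Dp h (fracInt h s g) j) := by
  have h1 := ((aux_shift hg j 1).sub (hg j).hasSum).div_const h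
  have e : (fun m : ℤ => Knsh h s (j - m) * Dp h g m) =
      fun m : ℤ => (Knsh h s (j - m) * g (m + 1) - Knsh h s (j - m) * g m) / h := by
    funext m; simp only [Dp]; ring
  rw [e]
  exact h1

lemma aux_hasSum_Dm {h s : ℝ} {g : ℤ → ℝ} (hg : AuxGood h s g) (j : ℤ) :
    HasSum (fun m : ℤ => Knsh h s (j - m) * Dm h g m) (Dm h (fracInt h s g) j) := by
  have h1 := ((hg j).hasSum.sub (aux_shift hg j (-1))).div_const h
  have e : (fun m : ℤ => Knsh h s (j - m) * Dm h g m) =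
      fun m : ℤ => (Knsh h s (j - m) * g m - Knsh h s (j - m) * g (m + -1)) / h := by
    funext m; simp only [Dm, sub_eq_add_neg]; ring
  rw [e]
  exact h1

lemma aux_commute {h s : ℝ} {f : ℤ → ℝ} (hf : AuxGood h s f) (γ n : ℕ) :
    AuxGood h s ((Dp h)^[γ] ((Dm h)^[n] f)) ∧
      fracInt h s ((Dp h)^[γ] ((Dm h)^[n] f)) = (Dp h)^[γ] ((Dm h)^[n] (fracInt h s f)) := by
  have hm : AuxGood h s ((Dm h)^[n] f) ∧
      fracInt h s ((Dm h)^[n] f) = (Dm h)^[n] (fracInt h s f) := by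
    induction n with
    | zero => exact ⟨hf, rfl⟩
    | succ n ih =>
      rw [Function.iterate_succ_apply', Function.iterate_succ_apply', ← ih.2]
      exact ⟨fun j => (aux_hasSum_Dm ih.1 j).summable,
        funext fun j => (aux_hasSum_Dm ih.1 j).tsum_eq⟩
  induction γ with
  | zero => exact hm
  | succ γ ih =>
    rw [Function.iterate_succ_apply', Function.iterate_succ_apply', ← ih.2]
    exact ⟨fun j => (aux_hasSum_Dp ih.1 j).summable,
      funext fun j => (aux_hasSum_Dp ih.1 j).tsum_eq⟩

lemma aux_hsemi_le {h β X : ℝ} (hh : 0 < h) (u : ℤ → ℝ)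
    (hu : ∀ (j : ℤ) (R : ℕ), 1 ≤ R → |u j - u (j + R)| ≤ X * (h * R) ^ β) :
    hsemi h β u ≤ ENNReal.ofReal X := by
  unfold hsemi
  refine iSup_le fun j => iSup_le fun m => iSup_le fun hjm => ?_
  apply ENNReal.ofReal_le_ofReal
  have hpos : 0 < |((j - m : ℤ) : ℝ)| := by
    rw [abs_pos]; exact_mod_cast sub_ne_zero.mpr hjm
  rw [div_le_iff₀ (by positivity), ← aux_natAbs_cast]
  rcases lt_or_gt_of_ne hjm with hlt | hlt
  · have := hu j (j - m).natAbs (by omega)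
    rwa [show j + ((j - m).natAbs : ℤ) = m by omega] at this
  · have := hu m (j - m).natAbs (by omega)
    rwa [show m + ((j - m).natAbs : ℤ) = j by omega, abs_sub_comm] at this

lemma aux_le_hsemi {h α : ℝ} (hh : 0 < h) (g : ℤ → ℝ) (hg : hsemi h α g < ⊤) (m n : ℤ) :
    |g m - g n| ≤ (hsemi h α g).toReal * (h * |((m - n : ℤ) : ℝ)|) ^ α := by
  by_cases hmn : m = n
  · subst hmn
    simp only [sub_self, abs_zero]
    positivity
  have hpos : 0 < |((m - n : ℤ) : ℝ)| := by
    rw [abs_pos]; exact_mod_cast sub_ne_zero.mpr hmn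
  rw [← div_le_iff₀ (by positivity)]
  apply (ENNReal.ofReal_le_iff_le_toReal hg.ne).mp
  unfold hsemi
  exact le_iSup_of_le m (le_iSup_of_le n (le_iSup_of_le hmn le_rfl))

lemma aux_fracInt_scale (h s : ℝ) (g : ℤ → ℝ) (j : ℤ) :
    fracInt h s g j = h ^ (2 * s) * ∑' m : ℤ, Knsh 1 s (j - m) * g m := by
  unfold fracInt
  rw [← tsum_mul_left]
  congr 1
  funext m
  rw [aux_Knsh_scale h]; ring

lemma auxGood_one {h s : ℝ} (hh : 0 < h) {g : ℤ → ℝ} (hg : AuxGood h s g) : AuxGood 1 s g := by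
  intro j
  have h1 := (hg j).mul_left (h ^ (2 * s))⁻¹
  refine h1.congr (fun m => ?_)
  rw [aux_Knsh_scale h]
  have : h ^ (2 * s) ≠ 0 := by positivity
  field_simp

lemma aux_case1 {α s : ℝ} (hs0 : 0 < s) (hs1 : s < 1 / 2) (hα : 0 ≤ α) (h1 : α + 2 * s < 1) :
    ∃ C : ℝ, 0 < C ∧ ∀ (h : ℝ), 0 < h → ∀ (g : ℤ → ℝ) (A : ℝ), 0 ≤ A → AuxGood h s g →
      (∀ m n : ℤ, |g m - g n| ≤ A * (h * |((m - n : ℤ) : ℝ)|) ^ α) →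
      hsemi h (α + 2 * s) (fracInt h s g) ≤ ENNReal.ofReal (C * A) := by
  obtain ⟨C0, hC0, H1, H2, -⟩ := aux_kernel hs0 hs1
  have hs2 : 0 < 2 * s := by linarith
  set C1 := C0 + C0 * (2 * (4 / (2 * s))) with hC1
  have hC1p : 0 < C1 := by positivity
  have hC01 : C0 ≤ C1 := by
    have : 0 ≤ C0 * (2 * (4 / (2 * s))) := by positivity
    linarith
  obtain ⟨C, hC, hcore⟩ := aux_core (a := 1 - 2 * s) (α := α) (β := α + 2 * s) (C0 := C1)
    (by linarith) hα (by ring) (by linarith) h1 hC1p (Knsh 1 s)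
    (fun m => (H1 m).trans (by gcongr))
    (fun m => by
      have := H2 m
      rw [show -(1 - 2 * s) - 1 = -(2 - 2 * s) by ring]
      exact this.trans (by gcongr))
    (fun R hR => by
      have hR0 : (1 : ℝ) ≤ (R : ℝ) := by exact_mod_cast hR
      have hRpos : (0 : ℝ) < (R : ℝ) := by linarith
      calc |∑ m ∈ Finset.Icc (-(R : ℤ)) (3 * R), Knsh 1 s m|
          ≤ ∑ m ∈ Finset.Icc (-(R : ℤ)) (3 * R), |Knsh 1 s m| := Finset.abs_sum_le_sum_abs _ _
        _ ≤ ∑ m ∈ Finset.Icc (-(R : ℤ)) (3 * R), C0 * (1 + |(m : ℝ)|) ^ (2 * s - 1) :=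
            Finset.sum_le_sum (fun m _ => by
              rw [show 2 * s - 1 = -(1 - 2 * s) by ring]; exact H1 m)
        _ = C0 * ∑ m ∈ Finset.Icc (-(R : ℤ)) (3 * R), (1 + |(m : ℝ)|) ^ (2 * s - 1) := by
            rw [Finset.mul_sum]
        _ ≤ C0 * (2 * ((((3 * R : ℕ) : ℝ) + 1) ^ (2 * s) / (2 * s))) := by
            gcongr
            apply aux_near hs2 (by linarith) (3 * R)
            intro n hn
            simp at hn
            omega
        _ ≤ C0 * (2 * ((4 * (R : ℝ) ^ (2 * s)) / (2 * s))) := by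
            gcongr
            calc (((3 * R : ℕ) : ℝ) + 1) ^ (2 * s) ≤ (4 * (R : ℝ)) ^ (2 * s) := by
                  gcongr; push_cast; linarith
              _ = 4 ^ (2 * s) * (R : ℝ) ^ (2 * s) := Real.mul_rpow (by norm_num) hRpos.le
              _ ≤ 4 * (R : ℝ) ^ (2 * s) := by
                  gcongr
                  calc (4 : ℝ) ^ (2 * s) ≤ 4 ^ (1 : ℝ) :=
                        Real.rpow_le_rpow_of_exponent_le (by norm_num) (by linarith)
                    _ = 4 := Real.rpow_one _
        _ = (C0 * (2 * (4 / (2 * s)))) * (R : ℝ) ^ (1 - (1 - 2 * s)) := by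
            rw [sub_sub_cancel]; ring
        _ ≤ C1 * (R : ℝ) ^ (1 - (1 - 2 * s)) := by
            gcongr
            linarith)
  refine ⟨C, hC, ?_⟩
  intro h hh g A hA hgood hg
  apply aux_hsemi_le hh
  intro j R hR
  have h2 := hcore g (A * h ^ α) (by positivity) (auxGood_one hh hgood) (fun m n => by
    refine (hg m n).trans (le_of_eq ?_)
    rw [Real.mul_rpow hh.le (abs_nonneg _)]; ring) j R hR
  rw [aux_fracInt_scale h, aux_fracInt_scale h, ← mul_sub, abs_mul, abs_of_pos (by positivity)]
  calc _ ≤ h ^ (2 * s) * (C * (A * h ^ α) * (R : ℝ) ^ (α + 2 * s)) := by gcongr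
    _ = C * A * ((h ^ α * h ^ (2 * s)) * (R : ℝ) ^ (α + 2 * s)) := by ring
    _ = _ := by rw [← Real.rpow_add hh, ← Real.mul_rpow hh.le (Nat.cast_nonneg R)]

lemma aux_case2 {α s : ℝ} (hs0 : 0 < s) (hs1 : s < 1 / 2) (hα : 0 < α) (hα1 : α ≤ 1)
    (h1 : 1 < 2 * s + α) :
    ∃ C : ℝ, 0 < C ∧ ∀ (h : ℝ), 0 < h → ∀ (g : ℤ → ℝ) (A : ℝ), 0 ≤ A → AuxGood h s g →
      (∀ m n : ℤ, |g m - g n| ≤ A * (h * |((m - n : ℤ) : ℝ)|) ^ α) →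
      hsemi h (α + 2 * s - 1) (Dp h (fracInt h s g)) ≤ ENNReal.ofReal (C * A) := by
  obtain ⟨C0, hC0, H1, H2, H2'⟩ := aux_kernel hs0 hs1
  set L : ℤ → ℝ := fun m => Knsh 1 s (m + 1) - Knsh 1 s m with hL
  obtain ⟨C, hC, hcore⟩ := aux_core (a := 2 - 2 * s) (α := α) (β := α + 2 * s - 1) (C0 := 2 * C0)
    (by linarith) hα.le (by ring) (by linarith) (by linarith) (by positivity) L
    (fun m => (H2 m).trans (by gcongr; linarith))
    (fun m => by
      have := H2' m
      rw [show -(2 - 2 * s) - 1 = -(3 - 2 * s) by ring]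
      exact this.trans (by gcongr; linarith))
    (fun R hR => by
      have hR0 : (1 : ℝ) ≤ (R : ℝ) := by exact_mod_cast hR
      have hRpos : (0 : ℝ) < (R : ℝ) := by linarith
      have e : Finset.Icc (-(R : ℤ)) (3 * R) =
          Finset.Ico (-(R : ℤ)) (-(R : ℤ) + ((4 * R + 1 : ℕ) : ℤ)) := by
        ext x; simp; omega
      have hb : ∀ m : ℤ, (R : ℝ) ≤ |(m : ℝ)| → |Knsh 1 s m| ≤ C0 * (R : ℝ) ^ (-(1 - 2 * s)) := by
        intro m hm
        refine (H1 m).trans ?_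
        gcongr C0 * ?_
        exact Real.rpow_le_rpow_of_nonpos hRpos (by linarith) (by linarith)
      rw [e, aux_telescope (Knsh 1 s)]
      have h2 := hb (-(R : ℤ)) (by simp)
      have h3 := hb (-(R : ℤ) + ((4 * R + 1 : ℕ) : ℤ)) (by
        refine le_trans ?_ (le_abs_self _)
        push_cast; linarith)
      rw [show 1 - (2 - 2 * s) = -(1 - 2 * s) by ring]
      have h4 := abs_sub (Knsh 1 s (-(R : ℤ) + ((4 * R + 1 : ℕ) : ℤ))) (Knsh 1 s (-(R : ℤ)))
      linarith)
  refine ⟨C, hC, ?_⟩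
  intro h hh g A hA hgood hg
  have hgood1 := auxGood_one hh hgood
  have hLs : ∀ j : ℤ, HasSum (fun m : ℤ => L (j - m) * g m)
      ((∑' m : ℤ, Knsh 1 s (j + 1 - m) * g m) - ∑' m : ℤ, Knsh 1 s (j - m) * g m) := by
    intro j
    have h3 := (hgood1 (j + 1)).hasSum.sub (hgood1 j).hasSum
    have e : (fun m : ℤ => L (j - m) * g m) =
        fun m : ℤ => Knsh 1 s (j + 1 - m) * g m - Knsh 1 s (j - m) * g m := by
      funext m
      simp only [hL]
      rw [show j - m + 1 = j + 1 - m by ring]; ring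
    rw [e]
    exact h3
  have hD : ∀ j : ℤ, Dp h (fracInt h s g) j = h ^ (2 * s - 1) * ∑' m : ℤ, L (j - m) * g m := by
    intro j
    rw [(hLs j).tsum_eq]
    simp only [Dp]
    rw [aux_fracInt_scale h, aux_fracInt_scale h, Real.rpow_sub_one hh.ne']
    ring
  apply aux_hsemi_le hh
  intro j R hR
  have h2 := hcore g (A * h ^ α) (by positivity) (fun j => (hLs j).summable) (fun m n => by
    refine (hg m n).trans (le_of_eq ?_)
    rw [Real.mul_rpow hh.le (abs_nonneg _)]; ring) j R hR
  rw [hD, hD, ← mul_sub, abs_mul, abs_of_pos (by positivity)]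
  calc _ ≤ h ^ (2 * s - 1) * (C * (A * h ^ α) * (R : ℝ) ^ (α + 2 * s - 1)) := by gcongr
    _ = C * A * ((h ^ α * h ^ (2 * s - 1)) * (R : ℝ) ^ (α + 2 * s - 1)) := by ring
    _ = _ := by
      rw [← Real.rpow_add hh, ← add_sub_assoc, ← Real.mul_rpow hh.le (Nat.cast_nonneg R)]

lemma aux_hsemi_Dm (h β : ℝ) (v : ℤ → ℝ) : hsemi h β (Dm h v) ≤ hsemi h β (Dp h v) := by
  unfold hsemi
  refine iSup_le fun j => iSup_le fun m => iSup_le fun hjm => ?_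
  refine le_iSup_of_le (j - 1) (le_iSup_of_le (m - 1) (le_iSup_of_le (by omega) (le_of_eq ?_)))
  simp [Dp, Dm]

/-- Discrete Schauder estimates for the fractional discrete integral. -/
theorem fracInt_discrete_Schauder (k : ℕ) (α s : ℝ)
    (hα0 : 0 < α) (hα1 : α ≤ 1) (hs0 : 0 < s) (hs1 : s < 1/2) :
    (2 * s + α < 1 → ∃ C : ℝ, 0 < C ∧ ∀ h : ℝ, 0 < h → ∀ f : ℤ → ℝ,
      (Summable fun m : ℤ => |f m| / (1 + |(m : ℝ)|) ^ (1 - 2 * s)) →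
      ksemi h k α f < ⊤ →
      ksemi h k (α + 2 * s) (fracInt h s f) ≤ ENNReal.ofReal C * ksemi h k α f) ∧
    (1 < 2 * s + α → ∃ C : ℝ, 0 < C ∧ ∀ h : ℝ, 0 < h → ∀ f : ℤ → ℝ,
      (Summable fun m : ℤ => |f m| / (1 + |(m : ℝ)|) ^ (1 - 2 * s)) →
      ksemi h k α f < ⊤ →
      ksemi h (k + 1) (α + 2 * s - 1) (fracInt h s f) ≤
        ENNReal.ofReal C * ksemi h k α f) ∧
    (∃ C : ℝ, 0 < C ∧ ∀ h : ℝ, 0 < h → ∀ f : ℤ → ℝ, ∀ M : ℝ,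
      (Summable fun m : ℤ => |f m| / (1 + |(m : ℝ)|) ^ (1 - 2 * s)) →
      (∀ j : ℤ, |f j| ≤ M) →
      hsemi h (2 * s) (fracInt h s f) ≤ ENNReal.ofReal (C * M)) := by
  have hconv : ∀ {C : ℝ} {x : ENNReal}, 0 < C → x < ⊤ →
      ENNReal.ofReal (C * x.toReal) = ENNReal.ofReal C * x := by
    intro C x hC hx
    rw [ENNReal.ofReal_mul hC.le, ENNReal.ofReal_toReal hx.ne]
  refine ⟨?_, ?_, ?_⟩
  · intro h1
    obtain ⟨C, hC, hmain⟩ := aux_case1 hs0 hs1 hα0.le (by linarith : α + 2 * s < 1)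
    refine ⟨C, hC, ?_⟩
    intro h hh f hf hfin
    have hgood : AuxGood h s f := auxGood_of_weighted hs0 hs1 f hf
    unfold ksemi at hfin ⊢
    rw [Finset.mul_sum]
    apply Finset.sum_le_sum
    intro γ hγ
    have hγfin := ENNReal.sum_lt_top.mp hfin γ hγ
    obtain ⟨hg, he⟩ := aux_commute hgood γ (k - γ)
    rw [← he, ← hconv hC hγfin]
    exact hmain h hh _ _ ENNReal.toReal_nonneg hg (aux_le_hsemi hh _ hγfin)
  · intro h1
    obtain ⟨C, hC, hmain⟩ := aux_case2 hs0 hs1 hα0 hα1 h1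
    refine ⟨((k + 1 + 1 : ℕ) : ℝ) * C, by positivity, ?_⟩
    intro h hh f hf hfin
    have hgood : AuxGood h s f := auxGood_of_weighted hs0 hs1 f hf
    have hterm : ∀ γ ∈ Finset.range (k + 1),
        hsemi h (α + 2 * s - 1) (Dp h ((Dp h)^[γ] ((Dm h)^[k - γ] (fracInt h s f)))) ≤
          ENNReal.ofReal C * ksemi h k α f := by
      intro γ hγ
      have hγfin := ENNReal.sum_lt_top.mp hfin γ hγ
      obtain ⟨hg, he⟩ := aux_commute hgood γ (k - γ)
      rw [← he]
      refine (hmain h hh _ _ ENNReal.toReal_nonneg hg (aux_le_hsemi hh _ hγfin)).trans ?_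
      rw [hconv hC hγfin]
      gcongr
      unfold ksemi
      exact Finset.single_le_sum
        (f := fun γ => hsemi h α ((Dp h)^[γ] ((Dm h)^[k - γ] f))) (fun _ _ => zero_le) hγ
    have hall : ∀ γ ∈ Finset.range (k + 1 + 1),
        hsemi h (α + 2 * s - 1) ((Dp h)^[γ] ((Dm h)^[k + 1 - γ] (fracInt h s f))) ≤
          ENNReal.ofReal C * ksemi h k α f := by
      intro γ hγ
      rcases γ with _ | γ
      · have h2 := hterm 0 (by simp)
        rw [Nat.sub_zero, Function.iterate_succ_apply']
        exact (aux_hsemi_Dm _ _ _).trans h2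
      · rw [Nat.add_sub_add_right, Function.iterate_succ_apply']
        exact hterm γ (by simpa using hγ)
    have h3 := Finset.sum_le_card_nsmul _ _ _ hall
    rw [Finset.card_range, nsmul_eq_mul] at h3
    rw [ENNReal.ofReal_mul (by positivity), ENNReal.ofReal_natCast, mul_assoc]
    exact h3
  · obtain ⟨C, hC, hmain⟩ := aux_case1 hs0 hs1 le_rfl (by linarith : 0 + 2 * s < 1)
    refine ⟨C * 2, by positivity, ?_⟩
    intro h hh f M hf hM
    have hM0 : 0 ≤ M := (abs_nonneg _).trans (hM 0)
    have h2 := hmain h hh f (2 * M) (by positivity) (auxGood_of_weighted hs0 hs1 f hf) (by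
      intro m n
      rw [Real.rpow_zero, mul_one]
      have := abs_sub (f m) (f n)
      linarith [hM m, hM n])
    rw [zero_add] at h2
    rwa [mul_assoc]
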